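/- arXiv:2208.03253 — 5 statements merged into one kernel-verified Lean document; each statement's English description precedes it below -/
import Mathlib

section
/- Let p : [0,1] × ℝ → ℝ be such that p(ε, y) > 0 for all (ε, y), y ↦ p(ε, y) is measurable for each ε, for each y the map ε ↦ p(ε, y) is continuously differentiable on [0,1] with derivative ṗ(ε, y), and the function (ε, y) ↦ ṗ(ε, y)² / p(ε, y) is measurable and integrable on [0,1] × ℝ. Then ∫_ℝ (√(p(0,y)) − √(p(1,y)))² dy ≤ ∫_0^1 ∫_ℝ ṗ(ε,y)² / p(ε,y) dy dε. -/
open MeasureTheory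

/-- Interpolation bound: the squared Hellinger distance between the endpoints of a
smooth one-parameter family of positive densities is dominated by the integrated
Fisher information of the family. -/
theorem stmt2
    (p pdot : ℝ → ℝ → ℝ)
    (hpos : ∀ ε ∈ Set.Icc (0 : ℝ) 1, ∀ y : ℝ, 0 < p ε y)
    (hmeas : ∀ ε ∈ Set.Icc (0 : ℝ) 1, Measurable (fun y => p ε y))
    (hderiv : ∀ y : ℝ, ∀ ε ∈ Set.Icc (0 : ℝ) 1,
      HasDerivWithinAt (fun e => p e y) (pdot ε y) (Set.Icc (0 : ℝ) 1) ε)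
    (hcont : ∀ y : ℝ, ContinuousOn (fun e => pdot e y) (Set.Icc (0 : ℝ) 1))
    (hint : IntegrableOn (fun q : ℝ × ℝ => (pdot q.1 q.2) ^ 2 / p q.1 q.2)
      (Set.Icc (0 : ℝ) 1 ×ˢ (Set.univ : Set ℝ)) volume) :
    ∫ y : ℝ, (Real.sqrt (p 0 y) - Real.sqrt (p 1 y)) ^ 2
      ≤ ∫ ε in Set.Icc (0 : ℝ) 1, ∫ y : ℝ, (pdot ε y) ^ 2 / p ε y := by
  have hint' : Integrable (fun q : ℝ × ℝ => (pdot q.1 q.2) ^ 2 / p q.1 q.2)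
      ((volume.restrict (Set.Icc (0 : ℝ) 1)).prod (volume : Measure ℝ)) := by
    have h := hint
    rw [IntegrableOn, Measure.volume_eq_prod, ← Measure.prod_restrict,
      Measure.restrict_univ] at h
    exact h
  rw [integral_integral_swap (f := fun ε y => (pdot ε y) ^ 2 / p ε y) hint']
  refine integral_mono_of_nonneg (Filter.Eventually.of_forall fun y => sq_nonneg _)
    hint'.integral_prod_right (Filter.Eventually.of_forall fun y => ?_)
  have hpc : ContinuousOn (fun e => p e y) (Set.Icc (0 : ℝ) 1) :=
    fun e he => (hderiv y e he).continuousWithinAt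
  have hsc : ContinuousOn (fun e => Real.sqrt (p e y)) (Set.Icc (0 : ℝ) 1) := hpc.sqrt
  have hgc : ContinuousOn (fun e => pdot e y / (2 * Real.sqrt (p e y)))
      (Set.Icc (0 : ℝ) 1) := by
    refine (hcont y).div (continuousOn_const.mul hsc) fun e he => ?_
    have := Real.sqrt_pos.2 (hpos e he y)
    positivity
  have hFc : ContinuousOn (fun e => (pdot e y) ^ 2 / p e y) (Set.Icc (0 : ℝ) 1) :=
    ((hcont y).pow 2).div hpc fun e he => (hpos e he y).ne'
  have huI : Set.uIcc (0 : ℝ) 1 = Set.Icc 0 1 := Set.uIcc_of_le zero_le_one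
  have hgi : IntervalIntegrable (fun e => pdot e y / (2 * Real.sqrt (p e y))) volume 0 1 :=
    ContinuousOn.intervalIntegrable (by rwa [huI])
  have hFi : IntervalIntegrable (fun e => (pdot e y) ^ 2 / p e y) volume 0 1 :=
    ContinuousOn.intervalIntegrable (by rwa [huI])
  have hftc : ∫ e in (0 : ℝ)..1, pdot e y / (2 * Real.sqrt (p e y))
      = Real.sqrt (p 1 y) - Real.sqrt (p 0 y) := by
    refine intervalIntegral.integral_eq_sub_of_hasDerivAt_of_le zero_le_one hsc
      (fun e he => ?_) hgi
    have he' := Set.Ioo_subset_Icc_self he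
    exact ((hderiv y e he').hasDerivAt (Icc_mem_nhds he.1 he.2)).sqrt (hpos e he' y).ne'
  set c := Real.sqrt (p 1 y) - Real.sqrt (p 0 y) with hc
  have key : ∫ e in (0 : ℝ)..1, (2 * c * (pdot e y / (2 * Real.sqrt (p e y))) - c ^ 2)
      ≤ ∫ e in (0 : ℝ)..1, (pdot e y) ^ 2 / p e y := by
    refine intervalIntegral.integral_mono_on zero_le_one
      ((hgi.const_mul _).sub intervalIntegrable_const) hFi fun e he => ?_
    have hp := hpos e he y
    have h1 : (pdot e y) ^ 2 / p e y = 4 * (pdot e y / (2 * Real.sqrt (p e y))) ^ 2 := by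
      rw [div_pow, mul_pow, Real.sq_sqrt hp.le]
      field_simp
      norm_num
    rw [h1]
    nlinarith [sq_nonneg (pdot e y / (2 * Real.sqrt (p e y)) - c),
      sq_nonneg (pdot e y / (2 * Real.sqrt (p e y)))]
  rw [intervalIntegral.integral_sub (hgi.const_mul _) intervalIntegrable_const,
    intervalIntegral.integral_const_mul, hftc, intervalIntegral.integral_const,
    intervalIntegral.integral_of_le zero_le_one, ← integral_Icc_eq_integral_Ioc] at key
  simp only [smul_eq_mul] at key
  have h2 : (Real.sqrt (p 0 y) - Real.sqrt (p 1 y)) ^ 2 = c ^ 2 := by rw [hc]; ring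
  show (Real.sqrt (p 0 y) - Real.sqrt (p 1 y)) ^ 2 ≤ _
  rw [h2]
  linarith
end

section
/- In the perturbed stationary densities setup, the normalizing constants satisfy |1/c̃ − 1/c| ≤ 20 h / M. -/
open MeasureTheory

/-- In the perturbed stationary densities setup, the normalizing constants satisfy
`|1/c̃ − 1/c| ≤ 20 h / M`. -/
theorem stmt4
    (xstar A h M : ℝ) (hA : 1 ≤ A) (hh0 : 0 < h) (hh1 : h ≤ 1) (hM : 2 ≤ M)
    (b : ℝ → ℝ) (hbm : Measurable b)
    (hb0 : ∀ x ∈ Set.Icc (xstar - A) (xstar + A), b x = 0)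
    (Bf : ℝ → ℝ) (hBf : ∀ x, Bf x = ∫ y in xstar..x, b y)
    (c : ℝ) (hc : 0 < c)
    (hint : Integrable (fun x => Real.exp (2 * Bf x)) volume)
    (hc1 : ∫ x : ℝ, Real.exp (2 * Bf x) = 1 / c)
    (ψ : ℝ → ℝ) (hψm : Measurable ψ)
    (hψsupp : Function.support ψ ⊆ Set.Icc (xstar - h) (xstar + h))
    (hψ1 : ∀ x, |ψ x| ≤ 1) (hψx : ψ xstar = 1)
    (ctil : ℝ) (hctil : 0 < ctil)
    (hctil1 : 1 / ctil = ∫ x : ℝ, (1 + ψ x / M)⁻¹ ^ 2 * Real.exp (2 * Bf x)) :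
    |1 / ctil - 1 / c| ≤ 20 * h / M := by
  have hI : Integrable (fun x => (1 + ψ x / M)⁻¹ ^ 2 * Real.exp (2 * Bf x)) volume := by
    by_contra hn
    rw [integral_undef hn] at hctil1
    have : 0 < 1 / ctil := by positivity
    linarith
  have hM0 : 0 < M := by linarith
  rw [hctil1, ← hc1, ← integral_sub hI hint]
  have hsupp : ∀ x, x ∉ Set.Icc (xstar - h) (xstar + h) →
      (1 + ψ x / M)⁻¹ ^ 2 * Real.exp (2 * Bf x) - Real.exp (2 * Bf x) = 0 := by
    intro x hx
    have h0 : ψ x = 0 := by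
      by_contra hne
      exact hx (hψsupp hne)
    simp [h0]
  rw [← setIntegral_eq_integral_of_forall_compl_eq_zero hsupp]
  have hbound : ∀ x ∈ Set.Icc (xstar - h) (xstar + h),
      ‖(1 + ψ x / M)⁻¹ ^ 2 * Real.exp (2 * Bf x) - Real.exp (2 * Bf x)‖ ≤ 6 / M := by
    intro x hx
    have hB : Bf x = 0 := by
      rw [hBf]
      have : ∀ y ∈ Set.uIcc xstar x, b y = 0 := by
        intro y hy
        apply hb0
        have hsub : Set.uIcc xstar x ⊆ Set.Icc (xstar - A) (xstar + A) := by
          apply Set.uIcc_subset_Icc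
          · constructor <;> linarith
          · constructor <;> linarith [hx.1, hx.2]
        exact hsub hy
      rw [intervalIntegral.integral_congr (g := fun _ => (0 : ℝ)) this]
      simp
    have ht : |ψ x / M| ≤ 1 / M := by
      rw [abs_div, abs_of_pos hM0]
      gcongr
      exact hψ1 x
    have hM2 : 1 / M ≤ 1 / 2 := by gcongr
    have h6 : 6 / M = 6 * (1 / M) := by ring
    rw [hB, h6]
    generalize ψ x / M = t at ht
    generalize 1 / M = m at ht hM2
    have ht2 : |t| ≤ 1 / 2 := ht.trans hM2
    obtain ⟨h1, h2⟩ := abs_le.1 ht2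
    have hp : 0 < 1 + t := by linarith
    have e : (1 + t)⁻¹ ^ 2 * Real.exp (2 * 0) - Real.exp (2 * 0)
        = -t * ((2 + t) / (1 + t) ^ 2) := by
      simp only [mul_zero, Real.exp_zero]
      field_simp
      ring
    have hq : (2 + t) / (1 + t) ^ 2 ≤ 6 := by
      rw [div_le_iff₀ (by positivity)]
      nlinarith
    have hq0 : 0 ≤ (2 + t) / (1 + t) ^ 2 := by
      apply div_nonneg <;> [linarith; positivity]
    rw [e, Real.norm_eq_abs, abs_mul, abs_neg, abs_of_nonneg hq0]
    nlinarith [abs_nonneg t]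
  have key := norm_setIntegral_le_of_norm_le_const (μ := volume)
    (by simp : volume (Set.Icc (xstar - h) (xstar + h)) < ⊤) hbound
  rw [Real.norm_eq_abs] at key
  refine key.trans ?_
  rw [Real.volume_real_Icc_of_le (by linarith)]
  rw [div_mul_eq_mul_div]
  apply div_le_div_of_nonneg_right _ hM0.le
  linarith
end

section
/- In the perturbed stationary densities setup, assume additionally that c · h ≤ 1/120. Then the two densities separate at the point x*: |π̃(x*) − π(x*)| = |c̃/(1 + 1/M)² − c| ≥ c/(2M). -/
open MeasureTheory

/-- In the perturbed stationary densities setup with `c·h ≤ 1/120`, the two stationary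
densities separate at the point `x*`: `|π̃(x*) − π(x*)| = |c̃/(1+1/M)² − c| ≥ c/(2M)`. -/
theorem stmt5
    (xstar A h M : ℝ) (hA : 1 ≤ A) (hh0 : 0 < h) (hh1 : h ≤ 1) (hM : 2 ≤ M)
    (b : ℝ → ℝ) (hbm : Measurable b)
    (hb0 : ∀ x ∈ Set.Icc (xstar - A) (xstar + A), b x = 0)
    (Bf : ℝ → ℝ) (hBf : ∀ x, Bf x = ∫ y in xstar..x, b y)
    (c : ℝ) (hc : 0 < c)
    (hint : Integrable (fun x => Real.exp (2 * Bf x)) volume)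
    (hc1 : ∫ x : ℝ, Real.exp (2 * Bf x) = 1 / c)
    (ψ : ℝ → ℝ) (hψm : Measurable ψ)
    (hψsupp : Function.support ψ ⊆ Set.Icc (xstar - h) (xstar + h))
    (hψ1 : ∀ x, |ψ x| ≤ 1) (hψx : ψ xstar = 1)
    (ctil : ℝ) (hctil : 0 < ctil)
    (hctil1 : 1 / ctil = ∫ x : ℝ, (1 + ψ x / M)⁻¹ ^ 2 * Real.exp (2 * Bf x))
    (π πtil : ℝ → ℝ)
    (hπ : π = fun x => c * Real.exp (2 * Bf x))
    (hπtil : πtil = fun x => ctil * (1 + ψ x / M)⁻¹ ^ 2 * Real.exp (2 * Bf x))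
    (hch : c * h ≤ 1 / 120) :
    |πtil xstar - π xstar| = |ctil / (1 + 1 / M) ^ 2 - c| ∧
      c / (2 * M) ≤ |πtil xstar - π xstar| := by
  have hBz : ∀ x ∈ Set.Icc (xstar - h) (xstar + h), Bf x = 0 := by
    intro x hx
    rw [hBf, intervalIntegral.integral_congr (g := fun _ => (0:ℝ))]
    · simp
    · intro y hy
      apply hb0
      have h1 : Set.uIcc xstar x ⊆ Set.Icc (xstar - A) (xstar + A) := by
        apply Set.uIcc_subset_Icc
        · constructor <;> linarith
        · constructor <;> linarith [hx.1, hx.2]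
      exact h1 hy
  have hB0 : Bf xstar = 0 := hBz xstar ⟨by linarith, by linarith⟩
  have hM0 : 0 < M := by linarith
  have hE : πtil xstar - π xstar = ctil / (1 + 1 / M) ^ 2 - c := by
    rw [hπ, hπtil]
    simp only [hB0, hψx, mul_zero, Real.exp_zero, mul_one, inv_pow]
    rfl
  refine ⟨by rw [hE], ?_⟩
  rw [hE]
  obtain ⟨u, hu⟩ : ∃ u, u = 1 / M := ⟨_, rfl⟩
  have hu0 : 0 < u := by rw [hu]; positivity
  have hu2 : u ≤ 1 / 2 := by rw [hu]; exact one_div_le_one_div_of_le (by norm_num) hM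
  have hgi : Integrable (fun x : ℝ => (1 + ψ x / M)⁻¹ ^ 2 * Real.exp (2 * Bf x)) volume := by
    by_contra hn
    rw [integral_undef hn] at hctil1
    have : 0 < 1 / ctil := by positivity
    linarith
  have hi : Integrable ((Set.Icc (xstar - h) (xstar + h)).indicator (fun _ => 2 * u)) volume := by
    rw [integrable_indicator_iff measurableSet_Icc]
    exact integrableOn_const (by simp) enorm_ne_top
  have hD : 1 / c - 4 * h * u ≤ 1 / ctil := by
    have h1 : ∫ x, (Real.exp (2 * Bf x) -
        (Set.Icc (xstar - h) (xstar + h)).indicator (fun _ => 2 * u) x) = 1 / c - 4 * h * u := by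
      rw [integral_sub hint hi, hc1, integral_indicator measurableSet_Icc, setIntegral_const]
      rw [Real.volume_real_Icc_of_le (by linarith), smul_eq_mul]
      ring
    rw [← h1, hctil1]
    apply integral_mono (hint.sub hi) hgi
    intro x
    by_cases hx : x ∈ Set.Icc (xstar - h) (xstar + h)
    · simp only [Pi.sub_apply, Set.indicator_of_mem hx, hBz x hx, mul_zero, Real.exp_zero, mul_one]
      have h2 := abs_le.1 (hψ1 x)
      have ht : ψ x / M = ψ x * u := by rw [hu]; ring
      rw [ht]
      obtain ⟨t, htt⟩ : ∃ t, t = ψ x * u := ⟨_, rfl⟩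
      rw [← htt]
      have ht1 : t ≤ u := by rw [htt]; nlinarith
      have ht2 : -u ≤ t := by rw [htt]; nlinarith
      have hp : 0 < 1 + t := by linarith
      have h3 : 1 - t ≤ (1 + t)⁻¹ := by
        rw [← one_div, le_div_iff₀ hp]; nlinarith [sq_nonneg t]
      have h4 : (1 - t) ^ 2 ≤ (1 + t)⁻¹ ^ 2 := pow_le_pow_left₀ (by linarith) h3 2
      nlinarith [sq_nonneg t]
    · have h0 : ψ x = 0 := by
        by_contra hne
        exact hx (hψsupp hne)
      simp [Set.indicator_of_notMem hx, h0]
  have hcm : ctil * (1 - u / 30) ≤ c := by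
    have h1 : ctil * c * (1 / c - 4 * h * u) ≤ ctil * c * (1 / ctil) :=
      mul_le_mul_of_nonneg_left hD (by positivity)
    have h2 : ctil * c * (1 / c - 4 * h * u) = ctil * (1 - 4 * (c * h) * u) := by
      field_simp
    have h3 : ctil * c * (1 / ctil) = c := by field_simp
    rw [h2, h3] at h1
    have h4 : c * h * u ≤ 1 / 120 * u := mul_le_mul_of_nonneg_right hch hu0.le
    have h5 : ctil * (1 - u / 30) ≤ ctil * (1 - 4 * (c * h) * u) :=
      mul_le_mul_of_nonneg_left (by linarith) hctil.le
    linarith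
  have hk : c / (2 * M) = c * u / 2 := by rw [hu]; field_simp
  rw [hk, ← hu, abs_sub_comm]
  refine le_trans ?_ (le_abs_self _)
  have hpoly : 1 ≤ (1 - u / 30) * ((1 - u / 2) * (1 + u) ^ 2) := by
    have : 0 ≤ u * u := by positivity
    have h1 : 1 + u ≤ (1 - u / 2) * (1 + u) ^ 2 := by nlinarith [mul_nonneg this (by linarith : 0 ≤ 1/2 - u)]
    nlinarith [mul_le_mul_of_nonneg_left h1 (by linarith : 0 ≤ 1 - u / 30)]
  have hfin : ctil / (1 + u) ^ 2 ≤ c * (1 - u / 2) := by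
    rw [div_le_iff₀ (by positivity)]
    have hq : 0 ≤ (1 - u / 2) * (1 + u) ^ 2 := mul_nonneg (by linarith) (by positivity)
    calc ctil = ctil * 1 := by ring
      _ ≤ ctil * ((1 - u / 30) * ((1 - u / 2) * (1 + u) ^ 2)) :=
        mul_le_mul_of_nonneg_left hpoly hctil.le
      _ = (ctil * (1 - u / 30)) * ((1 - u / 2) * (1 + u) ^ 2) := by ring
      _ ≤ c * ((1 - u / 2) * (1 + u) ^ 2) := mul_le_mul_of_nonneg_right hcm hq
      _ = _ := by ring
  linarith
end

section
/- In the perturbed stationary densities setup, assume additionally that there are constants 0 < c₀ ≤ C₀ and C₁ ≥ 0 with c₀ ≤ c ≤ C₀, c̃ ≤ C₀ and |c̃ − c| ≤ C₁ h / M. Then the squared Hellinger distance between the two densities satisfies ∫_ℝ (√(π(x)) − √(π̃(x)))² dx ≤ C h / M², where C depends only on c₀, C₀ and C₁. -/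
open MeasureTheory

/-- In the perturbed stationary densities setup, if the normalizing constants are
comparable (`c₀ ≤ c ≤ C₀`, `c̃ ≤ C₀`, `|c̃ − c| ≤ C₁ h / M`), then the squared Hellinger
distance between the two stationary densities is at most `C h / M²`, where `C` depends
only on `c₀`, `C₀`, `C₁`. -/
theorem stmt6
    (c₀ C₀ C₁ : ℝ) (hc₀ : 0 < c₀) (hC₀ : c₀ ≤ C₀) (hC₁ : 0 ≤ C₁) :
    ∃ C : ℝ, 0 ≤ C ∧
      ∀ (xstar A h M : ℝ), 1 ≤ A → 0 < h → h ≤ 1 → 2 ≤ M →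
      ∀ b : ℝ → ℝ, Measurable b →
        (∀ x ∈ Set.Icc (xstar - A) (xstar + A), b x = 0) →
      ∀ Bf : ℝ → ℝ, (∀ x, Bf x = ∫ y in xstar..x, b y) →
      ∀ c : ℝ, 0 < c →
        Integrable (fun x => Real.exp (2 * Bf x)) volume →
        (∫ x : ℝ, Real.exp (2 * Bf x) = 1 / c) →
      ∀ ψ : ℝ → ℝ, Measurable ψ →
        Function.support ψ ⊆ Set.Icc (xstar - h) (xstar + h) →
        (∀ x, |ψ x| ≤ 1) → ψ xstar = 1 →
      ∀ ctil : ℝ, 0 < ctil →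
        (1 / ctil = ∫ x : ℝ, (1 + ψ x / M)⁻¹ ^ 2 * Real.exp (2 * Bf x)) →
      c₀ ≤ c → c ≤ C₀ → ctil ≤ C₀ → |ctil - c| ≤ C₁ * h / M →
      ∫ x : ℝ, (Real.sqrt (c * Real.exp (2 * Bf x))
          - Real.sqrt (ctil * (1 + ψ x / M)⁻¹ ^ 2 * Real.exp (2 * Bf x))) ^ 2
        ≤ C * h / M ^ 2 := by
  refine ⟨2 * C₁ ^ 2 / c₀ ^ 2 + 16 * C₀, by have := hc₀.le.trans hC₀; positivity, ?_⟩
  intro xstar A h M hA hh hh1 hM b _ hb0 Bf hBf c hc hint hintc ψ _ hsupp hψ _ ctil hctil _ h1 h2 h3 h4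
  have hC₀p : 0 < C₀ := by linarith
  have hMp : 0 < M := by linarith
  have hB0 : ∀ x ∈ Set.Icc (xstar - h) (xstar + h), Bf x = 0 := by
    intro x hx
    rw [hBf]
    rw [intervalIntegral.integral_congr (g := fun _ => (0 : ℝ))]
    · simp
    · intro y hy
      apply hb0
      have : Set.uIcc xstar x ⊆ Set.Icc (xstar - A) (xstar + A) := by
        apply Set.uIcc_subset_Icc
        · constructor <;> linarith
        · constructor <;> linarith [hx.1, hx.2]
      exact this hy
  have hsq : (Real.sqrt c - Real.sqrt ctil) ^ 2 ≤ C₁ ^ 2 * h / (M ^ 2 * c₀) := by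
    have e1 : (Real.sqrt c - Real.sqrt ctil) ^ 2 * c ≤ (ctil - c) ^ 2 := by
      have a1 := Real.sq_sqrt hc.le
      have a2 := Real.sq_sqrt hctil.le
      have p1 := Real.sqrt_nonneg c
      have p2 := Real.sqrt_nonneg ctil
      generalize Real.sqrt c = s at *
      generalize Real.sqrt ctil = t at *
      subst a1 a2
      have : (t ^ 2 - s ^ 2) ^ 2 = (s - t) ^ 2 * (s + t) ^ 2 := by ring
      rw [this]
      gcongr
      linarith
    have e2 : (ctil - c) ^ 2 ≤ (C₁ * h / M) ^ 2 := by
      rw [← sq_abs]; gcongr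
    have e3 : (C₁ * h / M) ^ 2 ≤ C₁ ^ 2 * h / M ^ 2 := by
      rw [div_pow, mul_pow]
      gcongr
      nlinarith
    have e4 : (Real.sqrt c - Real.sqrt ctil) ^ 2 * c₀ ≤ (Real.sqrt c - Real.sqrt ctil) ^ 2 * c := by
      gcongr
    rw [← div_div, le_div_iff₀ hc₀]
    linarith
  set D : ℝ := C₁ ^ 2 * h / (M ^ 2 * c₀) with hD
  set S := Set.Icc (xstar - h) (xstar + h) with hS
  have hDn : 0 ≤ D := by positivity
  have hgi : Integrable (S.indicator (fun _ : ℝ => 8 * C₀ / M ^ 2)) volume := by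
    rw [integrable_indicator_iff measurableSet_Icc]
    exact integrableOn_const (by simp [hS])
  calc _ ≤ ∫ x : ℝ, (2 * D * Real.exp (2 * Bf x) + S.indicator (fun _ : ℝ => 8 * C₀ / M ^ 2) x) := by
        apply integral_mono_of_nonneg
        · exact Filter.Eventually.of_forall fun x => sq_nonneg _
        · exact (hint.const_mul _).add hgi
        · refine Filter.Eventually.of_forall fun x => ?_
          dsimp only
          have hq : |ψ x / M| ≤ 1 / 2 := by
            rw [abs_div, abs_of_pos hMp, div_le_div_iff₀ hMp two_pos]
            linarith [hψ x]
          have hq' := abs_le.1 hq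
          have hup : 0 < 1 + ψ x / M := by linarith
          set u := (1 + ψ x / M)⁻¹ with hu
          have hu0 : 0 < u := inv_pos.2 hup
          have hE := Real.exp_pos (2 * Bf x)
          have hs : (Real.sqrt (c * Real.exp (2 * Bf x))
              - Real.sqrt (ctil * u ^ 2 * Real.exp (2 * Bf x))) ^ 2
              = (Real.sqrt c - Real.sqrt ctil * u) ^ 2 * Real.exp (2 * Bf x) := by
            rw [Real.sqrt_mul hc.le, Real.sqrt_mul (by positivity), Real.sqrt_mul hctil.le,
              Real.sqrt_sq hu0.le, ← sub_mul, mul_pow, Real.sq_sqrt hE.le]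
          rw [hs]
          by_cases hx : x ∈ S
          · have hB := hB0 x hx
            rw [Set.indicator_of_mem hx, hB]
            simp only [mul_zero, Real.exp_zero, mul_one]
            have hu2 : u ≤ 2 := by
              rw [hu, inv_le_comm₀ hup two_pos]; linarith
            have h1u : 1 - u = ψ x / M * u := by
              have : (1 + ψ x / M) * u = 1 := mul_inv_cancel₀ hup.ne'
              linarith
            have k1 : (1 - u) ^ 2 ≤ 4 / M ^ 2 := by
              rw [h1u, mul_pow, div_pow, div_mul_eq_mul_div]
              have : ψ x ^ 2 ≤ 1 := by rw [← sq_abs]; exact pow_le_one₀ (abs_nonneg _) (hψ x)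
              gcongr
              nlinarith [sq_nonneg u]
            have k2 : ctil * (1 - u) ^ 2 ≤ C₀ * (4 / M ^ 2) := by gcongr
            have a2 := Real.sq_sqrt hctil.le
            have k3 : (Real.sqrt c - Real.sqrt ctil * u) ^ 2
                ≤ 2 * (Real.sqrt c - Real.sqrt ctil) ^ 2 + 2 * (ctil * (1 - u) ^ 2) := by
              have : ctil * (1 - u) ^ 2 = (Real.sqrt ctil * (1 - u)) ^ 2 := by rw [mul_pow, a2]
              rw [this]
              nlinarith [sq_nonneg ((Real.sqrt c - Real.sqrt ctil) - Real.sqrt ctil * (1 - u))]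
            have : 8 * C₀ / M ^ 2 = 2 * (C₀ * (4 / M ^ 2)) := by ring
            linarith
          · have hψ0 : ψ x = 0 := by
              by_contra hne
              exact hx (hsupp hne)
            have hu1 : u = 1 := by simp [hu, hψ0]
            rw [Set.indicator_of_notMem hx, hu1, mul_one, add_zero]
            gcongr
            linarith
    _ = 2 * D * (1 / c) + 2 * h * (8 * C₀ / M ^ 2) := by
        rw [integral_add (hint.const_mul _) hgi, integral_const_mul, hintc,
          integral_indicator measurableSet_Icc, setIntegral_const]
        simp only [hS, Measure.real, Real.volume_Icc, smul_eq_mul]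
        rw [ENNReal.toReal_ofReal (by linarith)]
        ring
    _ ≤ 2 * D * (1 / c₀) + 2 * h * (8 * C₀ / M ^ 2) := by gcongr
    _ = _ := by rw [hD]; field_simp; ring
end

section
/- Let k ≥ 1 be an integer, L ≥ 1, M ≥ 2, h ∈ (0, 1] and x* ∈ ℝ. Let ψ : ℝ → ℝ be k-times continuously differentiable with ‖ψ‖_∞ ≤ 1 and ‖ψ^{(j)}‖_∞ ≤ L for all 1 ≤ j ≤ k. Define F : ℝ → ℝ by F(x) = (1 + M^{−1} ψ((x − x*)/h))^{−2}. Then there exists a constant C depending only on k and L such that for every 1 ≤ j ≤ k, sup_{x ∈ ℝ} |F^{(j)}(x)| ≤ C / (M h^j). -/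
def BB (n : ℕ) (K : ℝ) (f : ℝ → ℝ) : Prop :=
  ContDiff ℝ n f ∧ ∀ i ≤ n, ∀ x, |iteratedDeriv i f x| ≤ K

lemma BB.mul {n : ℕ} {K K' : ℝ} {f g : ℝ → ℝ} (hf : BB n K f) (hg : BB n K' g) :
    BB n (2 ^ n * (K * K')) (fun x => f x * g x) := by
  have hK : 0 ≤ K := (abs_nonneg _).trans (hf.2 0 (Nat.zero_le _) 0)
  have hK' : 0 ≤ K' := (abs_nonneg _).trans (hg.2 0 (Nat.zero_le _) 0)
  refine ⟨hf.1.mul hg.1, fun i hi x => ?_⟩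
  have h := norm_iteratedFDeriv_mul_le hf.1 hg.1 x (n := i) (by exact_mod_cast hi)
  simp only [norm_iteratedFDeriv_eq_norm_iteratedDeriv, Real.norm_eq_abs] at h
  refine h.trans ?_
  calc _ ≤ ∑ j ∈ Finset.range (i + 1), (i.choose j : ℝ) * (K * K') := by
        refine Finset.sum_le_sum fun j hj => ?_
        have hj' : j ≤ i := Nat.lt_succ_iff.mp (Finset.mem_range.mp hj)
        rw [mul_assoc]
        have h1 := hf.2 j (hj'.trans hi) x
        have h2 := hg.2 (i - j) ((Nat.sub_le _ _).trans hi) x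
        gcongr
    _ = 2 ^ i * (K * K') := by
        rw [← Finset.sum_mul]
        congr 1
        exact_mod_cast Nat.sum_range_choose i
    _ ≤ _ := by
        gcongr
        norm_num

lemma BB.cmul {n : ℕ} {K : ℝ} {f : ℝ → ℝ} (c : ℝ) (hf : BB n K f) :
    BB n (|c| * K) (fun x => c * f x) := by
  refine ⟨contDiff_const.mul hf.1, fun i hi x => ?_⟩
  rw [iteratedDeriv_const_mul_field, abs_mul]
  exact mul_le_mul_of_nonneg_left (hf.2 i hi x) (abs_nonneg _)

lemma u_ge {e p : ℝ} (he : 0 ≤ e) (he' : e ≤ 1 / 2) (hp : |p| ≤ 1) : 1 / 2 ≤ 1 + e * p := by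
  have := (abs_le.mp hp).1
  nlinarith

lemma BB_deriv {n : ℕ} {L : ℝ} {ψ : ℝ → ℝ} (h : ContDiff ℝ (n + 1 : ℕ) ψ)
    (hb : ∀ j : ℕ, 1 ≤ j → j ≤ n + 1 → ∀ x, |iteratedDeriv j ψ x| ≤ L) :
    BB n L (deriv ψ) := by
  refine ⟨?_, fun i hi x => ?_⟩
  · push_cast at h
    exact (contDiff_succ_iff_deriv.mp h).2.2
  · have := hb (i + 1) (by omega) (by omega) x
    rwa [iteratedDeriv_succ'] at this

lemma deriv_w {e : ℝ} {ψ : ℝ → ℝ} (hd : Differentiable ℝ ψ) (x : ℝ) (h : 1 + e * ψ x ≠ 0) :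
    HasDerivAt (fun x => (1 + e * ψ x)⁻¹)
      (-e * (deriv ψ x * ((1 + e * ψ x)⁻¹ * (1 + e * ψ x)⁻¹))) x := by
  have h1 := ((((hd x).hasDerivAt).const_mul e).const_add 1).fun_inv h
  have h2 : -e * (deriv ψ x * ((1 + e * ψ x)⁻¹ * (1 + e * ψ x)⁻¹)) =
      -(e * deriv ψ x) / (1 + e * ψ x) ^ 2 := by
    rw [div_eq_mul_inv, ← inv_pow]
    ring
  rw [h2]
  exact h1

lemma w_bound (L : ℝ) (n : ℕ) : ∃ K : ℝ, 0 ≤ K ∧ ∀ (e : ℝ) (ψ : ℝ → ℝ), 0 ≤ e → e ≤ 1 / 2 →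
    ContDiff ℝ n ψ → (∀ x, |ψ x| ≤ 1) →
    (∀ j : ℕ, 1 ≤ j → j ≤ n → ∀ x, |iteratedDeriv j ψ x| ≤ L) →
    BB n K (fun x => (1 + e * ψ x)⁻¹) := by
  have key : ∀ (e : ℝ) (ψ : ℝ → ℝ), 0 ≤ e → e ≤ 1 / 2 → (∀ x, |ψ x| ≤ 1) → ∀ x,
      |(1 + e * ψ x)⁻¹| ≤ 2 := by
    intro e ψ he he' hp x
    have := u_ge he he' (hp x)
    rw [abs_inv, abs_of_pos (by linarith)]
    exact inv_le_of_inv_le₀ (by norm_num) (by linarith)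
  induction n with
  | zero =>
    refine ⟨2, by norm_num, fun e ψ he he' hc hp _ => ⟨?_, fun i hi x => ?_⟩⟩
    · refine ContDiff.inv (contDiff_const.add (contDiff_const.mul hc)) fun x => ?_
      have := u_ge he he' (hp x)
      linarith
    · obtain rfl : i = 0 := by omega
      simpa using key e ψ he he' hp x
  | succ n ih =>
    obtain ⟨K, hK, H⟩ := ih
    refine ⟨max 2 (1 * (2 ^ n * (L * (2 ^ n * (K * K))))), by positivity, 
      fun e ψ he he' hc hp hb => ⟨?_, fun i hi x => ?_⟩⟩
    · refine ContDiff.inv (contDiff_const.add (contDiff_const.mul hc)) fun x => ?_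
      have := u_ge he he' (hp x)
      linarith
    · have hw := H e ψ he he' (hc.of_le (by exact_mod_cast Nat.le_succ n)) hp
        (fun j h1 h2 => hb j h1 (by omega))
      have hB := ((BB_deriv hc hb).mul (hw.mul hw))
      have hn := (abs_nonneg _).trans (hB.2 0 (Nat.zero_le _) 0)
      have hB' := hB.cmul (-e)
      cases i with
      | zero => exact le_max_of_le_left (by simpa using key e ψ he he' hp x)
      | succ i =>
        rw [iteratedDeriv_succ']
        have hd : deriv (fun x => (1 + e * ψ x)⁻¹) = fun x =>
            (-e * (deriv ψ x * ((1 + e * ψ x)⁻¹ * (1 + e * ψ x)⁻¹))) := by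
          funext y
          have := u_ge he he' (hp y)
          exact (deriv_w (hc.differentiable (by simp)) y (by linarith)).deriv
        rw [hd]
        refine (hB'.2 i (by omega) x).trans (le_max_of_le_right ?_)
        refine mul_le_mul_of_nonneg_right ?_ hn
        rw [abs_neg, abs_of_nonneg he]
        linarith

/-- Derivative bounds for the perturbation factor `F(x) = (1 + M⁻¹ ψ((x−x*)/h))⁻²`
appearing in the perturbed invariant density: for `1 ≤ j ≤ k`,
`sup_x |F^{(j)}(x)| ≤ C / (M h^j)` with `C` depending only on `k` and `L`. -/
theorem stmt15 (k : ℕ) (hk : 1 ≤ k) (L : ℝ) (hL : 1 ≤ L) :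
    ∃ C : ℝ, 0 ≤ C ∧
      ∀ (M h xstar : ℝ), 2 ≤ M → 0 < h → h ≤ 1 →
        ∀ ψ : ℝ → ℝ, ContDiff ℝ k ψ → (∀ x, |ψ x| ≤ 1) →
          (∀ j : ℕ, 1 ≤ j → j ≤ k → ∀ x, |iteratedDeriv j ψ x| ≤ L) →
          ∀ j : ℕ, 1 ≤ j → j ≤ k → ∀ x : ℝ,
            |iteratedDeriv j (fun x => ((1 + M⁻¹ * ψ ((x - xstar) / h)) ^ 2)⁻¹) x|
              ≤ C / (M * h ^ j) := by
  obtain ⟨n, rfl⟩ : ∃ n, k = n + 1 := ⟨k - 1, by omega⟩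
  obtain ⟨K, hK, H⟩ := w_bound L n
  refine ⟨2 * (2 ^ n * (L * (2 ^ n * (K * (2 ^ n * (K * K)))))), by positivity, ?_⟩
  intro M h xs hM hh _ ψ hc hp hb j hj1 hj2 x
  have he : 0 ≤ M⁻¹ := by positivity
  have he' : M⁻¹ ≤ 1 / 2 := by
    rw [one_div]
    exact inv_anti₀ (by norm_num) hM
  have hne : ∀ y, 1 + M⁻¹ * ψ y ≠ 0 := fun y => by
    have := u_ge he he' (hp y)
    linarith
  have hw := H M⁻¹ ψ he he' (hc.of_le (by exact_mod_cast Nat.le_succ n)) hp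
        (fun j h1 h2 => hb j h1 (by omega))
  have hB := ((BB_deriv hc hb).mul (hw.mul (hw.mul hw))).cmul (-2 * M⁻¹)
  have hG : ContDiff ℝ (n + 1 : ℕ) (fun y => ((1 + M⁻¹ * ψ y) ^ 2)⁻¹) :=
    ContDiff.inv ((contDiff_const.add (contDiff_const.mul hc)).pow 2)
      (fun y => pow_ne_zero 2 (hne y))
  have hGj : ContDiff ℝ j (fun y => ((1 + M⁻¹ * ψ y) ^ 2)⁻¹) :=
    hG.of_le (by exact_mod_cast hj2)
  have e1 : iteratedDeriv j (fun x => ((1 + M⁻¹ * ψ ((x - xs) / h)) ^ 2)⁻¹) x =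
      (h⁻¹) ^ j * iteratedDeriv j (fun y => ((1 + M⁻¹ * ψ y) ^ 2)⁻¹) (h⁻¹ * (x - xs)) := by
    have a1 := congrFun (iteratedDeriv_comp_const_mul hGj h⁻¹) (x - xs)
    have a2 := congrFun (iteratedDeriv_comp_sub_const j
      (fun x => ((1 + M⁻¹ * ψ (h⁻¹ * x)) ^ 2)⁻¹) xs) x
    simp only [div_eq_inv_mul]
    exact a2.trans a1
  obtain ⟨i, rfl⟩ : ∃ i, j = i + 1 := ⟨j - 1, by omega⟩
  have hd : deriv (fun y => ((1 + M⁻¹ * ψ y) ^ 2)⁻¹) = fun y => -2 * M⁻¹ * (deriv ψ y *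
      ((1 + M⁻¹ * ψ y)⁻¹ * ((1 + M⁻¹ * ψ y)⁻¹ * (1 + M⁻¹ * ψ y)⁻¹))) := by
    funext y
    have h1 := (deriv_w (hc.differentiable (by simp)) y (hne y)).fun_pow 2
    simp only [inv_pow] at h1
    rw [h1.deriv]
    push_cast
    ring
  rw [e1, abs_mul, iteratedDeriv_succ' (n := i), hd]
  have hfin := hB.2 i (by omega) (h⁻¹ * (x - xs))
  rw [abs_of_pos (by positivity : 0 < h⁻¹ ^ (i + 1))]
  have e2 : |(-2 * M⁻¹)| = 2 * M⁻¹ := by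
    rw [abs_mul, abs_of_nonneg he]
    norm_num
  rw [e2] at hfin
  refine (mul_le_mul_of_nonneg_left hfin (by positivity)).trans (le_of_eq ?_)
  rw [inv_pow, div_eq_mul_inv, mul_inv]
  ring
end
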